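/- Vanishing-discount limit: for every integer Δ₀ ≥ 1, the limit lim_{β→1⁻} (1−β) V_β(Δ₀) exists, is independent of Δ₀, and equals the infimum over integers η ≥ 1 of the cycle average g(η) = (Σ_{ℓ=1}^{η} U(ℓ) + λ)/η. -/

import Mathlib

/-!
Write `c k = U (Δ k) + λ δ k` for the stage cost and `g*` for the infimum of the cycle averages.

*Lower bound.* Under any sensing sequence the undiscounted cost of the first `n` steps is at least
`n g* - λ` (`sum_cost_ge`): by monotonicity of `U` the initial age may be lowered to `1`; each
completed cycle of length `η` then costs `η g(η) ≥ η g*`, and the last, incomplete cycle falls short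
of this by at most one sensing cost `λ`.

*Upper bound.* Sensing at the multiples of `η` costs at most `n g(η) + C` during the first `n`
steps, with `C` independent of `n` (`sum_cost_periodic_le`).

A uniform bound on undiscounted partial sums passes to discounted ones with the same constant
(`abel_lower`, an Abel summation). Hence `g* / (1 - β) - λ ≤ V_β ≤ g(η) / (1 - β) + C`
(`le_valueFn`, `valueFn_le`), and multiplying by `1 - β` and letting `β → 1⁻` gives the limit.
-/

open scoped ENNReal

/-- Age-of-information trajectory from initial age `Δ₀` under sensing sequence `δ`. -/
def aoiTraj (Δ₀ : ℕ) (δ : ℕ → Bool) : ℕ → ℕ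
  | 0 => Δ₀
  | k + 1 => if δ k then 1 else aoiTraj Δ₀ δ k + 1

/-- β-discounted cost of the sensing sequence `δ` from initial age `Δ₀`,
valued in `[0,∞]`. -/
noncomputable def discCost (β lam : ℝ) (U : ℕ → ℝ) (Δ₀ : ℕ) (δ : ℕ → Bool) : ℝ≥0∞ :=
  ∑' k : ℕ, ENNReal.ofReal (β ^ k * (U (aoiTraj Δ₀ δ k) + lam * (if δ k then 1 else 0)))

/-- Discounted value function: infimum of the discounted cost over all sensing
sequences. -/
noncomputable def valueFn (β lam : ℝ) (U : ℕ → ℝ) (Δ₀ : ℕ) : ℝ≥0∞ :=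
  ⨅ δ : ℕ → Bool, discCost β lam U Δ₀ δ

open Filter

/-- The stage cost at time `k`. -/
noncomputable def stageCost (lam : ℝ) (U : ℕ → ℝ) (Δ₀ : ℕ) (δ : ℕ → Bool) (k : ℕ) : ℝ :=
  U (aoiTraj Δ₀ δ k) + lam * (if δ k then 1 else 0)

/-- The cost of a cycle of length `η` per unit of time. -/
noncomputable def cycleAvg (lam : ℝ) (U : ℕ → ℝ) (η : ℕ) : ℝ :=
  ((∑ ℓ ∈ Finset.Icc 1 η, U ℓ) + lam) / (η : ℝ)

lemma stageCost_nonneg {lam : ℝ} (hlam : 0 ≤ lam) {U : ℕ → ℝ} (hU0 : ∀ n, 0 ≤ U n)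
    (Δ₀ : ℕ) (δ : ℕ → Bool) (k : ℕ) : 0 ≤ stageCost lam U Δ₀ δ k := by
  unfold stageCost
  have := hU0 (aoiTraj Δ₀ δ k)
  split_ifs <;> linarith

/-- Abel summation: a lower bound on all partial sums survives discounting. -/
lemma abel_lower {β : ℝ} (h0 : 0 ≤ β) (h1 : β ≤ 1) (d : ℕ → ℝ) (C : ℝ)
    (hd : ∀ n, -C ≤ ∑ k ∈ Finset.range n, d k) (n : ℕ) :
    -C ≤ ∑ k ∈ Finset.range n, β ^ k * d k := by
  have key : ∀ n, β ^ n * ((∑ k ∈ Finset.range n, d k) + C) - C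
      ≤ ∑ k ∈ Finset.range n, β ^ k * d k := by
    intro n
    induction n with
    | zero => simp
    | succ n ih =>
      have hD := hd (n + 1)
      rw [Finset.sum_range_succ] at hD ⊢
      rw [Finset.sum_range_succ, pow_succ]
      have hp : 0 ≤ β ^ n := pow_nonneg h0 n
      have := mul_nonneg (mul_nonneg hp (sub_nonneg.2 h1))
        (by linarith : 0 ≤ (∑ k ∈ Finset.range n, d k) + d n + C)
      nlinarith
  have := mul_nonneg (pow_nonneg h0 n) (by linarith [hd n] :
    0 ≤ (∑ k ∈ Finset.range n, d k) + C)
  linarith [key n]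

lemma sum_discounted_const {β : ℝ} (h1 : β < 1) (g : ℝ) (n : ℕ) :
    ∑ k ∈ Finset.range n, β ^ k * g = g * (1 - β ^ n) / (1 - β) := by
  rw [← Finset.sum_mul, geom_sum_eq h1.ne, ← neg_div_neg_eq]
  ring

lemma aoiTraj_mono {a b : ℕ} (hab : a ≤ b) (δ : ℕ → Bool) (k : ℕ) :
    aoiTraj a δ k ≤ aoiTraj b δ k := by
  induction k with
  | zero => exact hab
  | succ k ih =>
    simp only [aoiTraj]
    split_ifs <;> omega

/-- If `g` is below every cycle average, then no sensing sequence beats `g` per unit of time by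
more than `lam` in total. -/
lemma sum_cost_ge {lam : ℝ} {U : ℕ → ℝ} (hUmono : Monotone U)
    {Δ₀ : ℕ} (hΔ₀ : 1 ≤ Δ₀) {g : ℝ}
    (hg : ∀ η : ℕ, η * g ≤ (∑ ℓ ∈ Finset.Icc 1 η, U ℓ) + lam)
    (δ : ℕ → Bool) (n : ℕ) :
    n * g - lam ≤ ∑ k ∈ Finset.range n, stageCost lam U Δ₀ δ k := by
  -- `m` is the time elapsed in the current cycle when the initial age is lowered to `1`.
  have key : ∀ n, ∃ m : ℕ, aoiTraj 1 δ n = m + 1 ∧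
      (n - m : ℝ) * g + ∑ ℓ ∈ Finset.Icc 1 m, U ℓ
        ≤ ∑ k ∈ Finset.range n, stageCost lam U Δ₀ δ k := by
    intro n
    induction n with
    | zero => exact ⟨0, rfl, by simp⟩
    | succ n ih =>
      obtain ⟨m, hm, ih⟩ := ih
      have hU : U (m + 1) ≤ U (aoiTraj Δ₀ δ n) := hUmono (hm ▸ aoiTraj_mono hΔ₀ δ n)
      rw [Finset.sum_range_succ]
      have hs := Finset.sum_Icc_succ_top (Nat.le_add_left 1 m) U
      by_cases h : δ n
      · refine ⟨0, by simp [aoiTraj, h], ?_⟩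
        have := hg (m + 1)
        rw [hs] at this
        have hc : stageCost lam U Δ₀ δ n = U (aoiTraj Δ₀ δ n) + lam := by simp [stageCost, h]
        push_cast at this ⊢
        simp only [zero_lt_one, Finset.Icc_eq_empty_of_lt, Finset.sum_empty]
        linarith
      · refine ⟨m + 1, by simp [aoiTraj, h, hm], ?_⟩
        have hc : stageCost lam U Δ₀ δ n = U (aoiTraj Δ₀ δ n) := by simp [stageCost, h]
        rw [hs]
        push_cast
        linarith
  obtain ⟨m, -, hm⟩ := key n
  linarith [hg m]

/-- The sensing sequence that senses at the multiples of `η`. -/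
def periodicSensing (η : ℕ) (k : ℕ) : Bool := decide (k % η = 0)

lemma succ_mod_cases {η : ℕ} (hη : 1 ≤ η) (n : ℕ) :
    ((n + 1) % η = 0 ∧ n % η + 1 = η) ∨ ((n + 1) % η = n % η + 1 ∧ n % η + 1 < η) := by
  have hlt := Nat.mod_lt n hη
  rcases Nat.lt_or_ge (n % η + 1) η with h | h
  · right
    refine ⟨?_, h⟩
    rw [← Nat.mod_add_mod, Nat.mod_eq_of_lt h]
  · left
    have : n % η + 1 = η := by omega
    refine ⟨?_, this⟩
    rw [← Nat.mod_add_mod, this, Nat.mod_self]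

lemma aoiTraj_periodic {η : ℕ} (hη : 1 ≤ η) (Δ₀ : ℕ) (k : ℕ) :
    aoiTraj Δ₀ (periodicSensing η) (k + 1) = k % η + 1 := by
  induction k with
  | zero => simp [aoiTraj, periodicSensing]
  | succ k ih =>
    rw [aoiTraj, ih]
    rcases succ_mod_cases hη k with ⟨h, -⟩ | ⟨h, -⟩ <;> simp [periodicSensing, h]

/-- The constant accounts for the initial step and for one incomplete cycle. -/
lemma sum_cost_periodic_le {lam : ℝ} (hlam : 0 ≤ lam) {U : ℕ → ℝ} (hU0 : ∀ n, 0 ≤ U n)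
    (Δ₀ : ℕ) {η : ℕ} (hη : 1 ≤ η) (n : ℕ) :
    ∑ k ∈ Finset.range n, stageCost lam U Δ₀ (periodicSensing η) k
      ≤ n * cycleAvg lam U η + (U Δ₀ + lam + η * cycleAvg lam U η) := by
  set g := cycleAvg lam U η with hgdef
  have hηpos : (0 : ℝ) < η := by exact_mod_cast hη
  have hηg : η * g = (∑ ℓ ∈ Finset.Icc 1 η, U ℓ) + lam := by
    rw [hgdef, cycleAvg]; field_simp
  have hg0 : 0 ≤ g :=
    div_nonneg (add_nonneg (Finset.sum_nonneg fun i _ => hU0 i) hlam) hηpos.le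
  -- The initial step is split off because the initial age is arbitrary.
  have key : ∀ n : ℕ, ∑ k ∈ Finset.range n, stageCost lam U Δ₀ (periodicSensing η) (k + 1)
      = (n - (n % η : ℕ) : ℝ) * g + ∑ ℓ ∈ Finset.Icc 1 (n % η), U ℓ := by
    intro n
    induction n with
    | zero => simp
    | succ n ih =>
      rw [Finset.sum_range_succ, ih, stageCost, aoiTraj_periodic hη]
      have hs := Finset.sum_Icc_succ_top (Nat.le_add_left 1 (n % η)) U
      rcases succ_mod_cases hη n with ⟨h, h'⟩ | ⟨h, h'⟩
      · rw [h'] at hs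
        have hc : ((n % η : ℕ) : ℝ) = η - 1 := by
          rw [eq_sub_iff_add_eq]; exact_mod_cast h'
        rw [hs] at hηg
        simp only [periodicSensing, h, h', decide_true, if_true, hc]
        push_cast
        simp only [zero_lt_one, Finset.Icc_eq_empty_of_lt, Finset.sum_empty]
        linarith
      · rw [h, hs]
        simp only [periodicSensing, h]
        push_cast
        simp
        ring
  cases n with
  | zero =>
    simp only [Finset.range_zero, Finset.sum_empty, Nat.cast_zero, zero_mul, zero_add]
    have := hU0 Δ₀
    positivity
  | succ n =>
    rw [Finset.sum_range_succ', key]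
    have h0 : stageCost lam U Δ₀ (periodicSensing η) 0 = U Δ₀ + lam := by
      simp [stageCost, aoiTraj, periodicSensing]
    have hsub : ∑ ℓ ∈ Finset.Icc 1 (n % η), U ℓ ≤ ∑ ℓ ∈ Finset.Icc 1 η, U ℓ :=
      Finset.sum_le_sum_of_subset_of_nonneg
        (Finset.Icc_subset_Icc_right (Nat.mod_lt n hη).le) fun i _ _ => hU0 i
    have := mul_nonneg (Nat.cast_nonneg (α := ℝ) (n % η)) hg0
    rw [h0]
    push_cast
    linarith

lemma sum_ofReal_cost {β lam : ℝ} (h0 : 0 ≤ β) (hlam : 0 ≤ lam) {U : ℕ → ℝ}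
    (hU0 : ∀ n, 0 ≤ U n) (Δ₀ : ℕ) (δ : ℕ → Bool) (n : ℕ) :
    ∑ k ∈ Finset.range n,
        ENNReal.ofReal (β ^ k * (U (aoiTraj Δ₀ δ k) + lam * (if δ k then 1 else 0)))
      = ENNReal.ofReal (∑ k ∈ Finset.range n, β ^ k * stageCost lam U Δ₀ δ k) :=
  (ENNReal.ofReal_sum_of_nonneg fun k _ =>
    mul_nonneg (pow_nonneg h0 k) (stageCost_nonneg hlam hU0 Δ₀ δ k)).symm

lemma le_valueFn {β lam : ℝ} (h0 : 0 < β) (h1 : β < 1) (hlam : 0 ≤ lam) {U : ℕ → ℝ}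
    (hU0 : ∀ n, 0 ≤ U n) (hUmono : Monotone U) {Δ₀ : ℕ} (hΔ₀ : 1 ≤ Δ₀) {g : ℝ}
    (hg : ∀ η : ℕ, η * g ≤ (∑ ℓ ∈ Finset.Icc 1 η, U ℓ) + lam) :
    ENNReal.ofReal (g / (1 - β) - lam) ≤ valueFn β lam U Δ₀ := by
  refine le_iInf fun δ => ?_
  have hpart : ∀ n : ℕ, ENNReal.ofReal (g * (1 - β ^ n) / (1 - β) - lam)
      ≤ discCost β lam U Δ₀ δ := by
    intro n
    refine le_trans ?_ (ENNReal.sum_le_tsum (Finset.range n))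
    rw [sum_ofReal_cost h0.le hlam hU0]
    refine ENNReal.ofReal_le_ofReal ?_
    have := abel_lower h0.le h1.le (fun k => stageCost lam U Δ₀ δ k - g) lam (fun n => by
      have := sum_cost_ge hUmono hΔ₀ hg δ n
      rw [Finset.sum_sub_distrib, Finset.sum_const, Finset.card_range, nsmul_eq_mul]
      linarith) n
    simp only [mul_sub, Finset.sum_sub_distrib] at this
    rw [sum_discounted_const h1] at this
    linarith
  have hpow := tendsto_pow_atTop_nhds_zero_of_lt_one h0.le h1
  have hlim : Tendsto (fun n : ℕ => g * (1 - β ^ n) / (1 - β) - lam) atTop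
      (nhds (g / (1 - β) - lam)) := by
    simpa using ((((hpow.const_sub 1).const_mul g).div_const (1 - β)).sub_const lam)
  exact le_of_tendsto' ((ENNReal.continuous_ofReal.tendsto _).comp hlim) hpart

lemma valueFn_le {β lam : ℝ} (h0 : 0 < β) (h1 : β < 1) (hlam : 0 ≤ lam) {U : ℕ → ℝ}
    (hU0 : ∀ n, 0 ≤ U n) (Δ₀ : ℕ) {η : ℕ} (hη : 1 ≤ η) :
    valueFn β lam U Δ₀ ≤ ENNReal.ofReal
      (cycleAvg lam U η / (1 - β) + (U Δ₀ + lam + η * cycleAvg lam U η)) := by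
  refine (iInf_le _ (periodicSensing η)).trans ?_
  refine ENNReal.tsum_le_of_sum_range_le fun n => ?_
  rw [sum_ofReal_cost h0.le hlam hU0]
  refine ENNReal.ofReal_le_ofReal ?_
  set g := cycleAvg lam U η with hgdef
  have hg0 : 0 ≤ g :=
    div_nonneg (add_nonneg (Finset.sum_nonneg fun i _ => hU0 i) hlam) (Nat.cast_nonneg η)
  have := abel_lower h0.le h1.le (fun k => g - stageCost lam U Δ₀ (periodicSensing η) k)
    (U Δ₀ + lam + η * g) (fun n => by
      have := sum_cost_periodic_le hlam hU0 Δ₀ hη n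
      rw [Finset.sum_sub_distrib, Finset.sum_const, Finset.card_range, nsmul_eq_mul]
      linarith) n
  simp only [mul_sub, Finset.sum_sub_distrib] at this
  rw [sum_discounted_const h1] at this
  have hle : g * (1 - β ^ n) / (1 - β) ≤ g / (1 - β) := by
    refine div_le_div_of_nonneg_right ?_ (by linarith)
    nlinarith [pow_nonneg h0.le n]
  linarith

theorem vanishing_discount_limit
    (lam : ℝ) (hlam : 0 ≤ lam)
    (U : ℕ → ℝ) (hU0 : ∀ n, 0 ≤ U n) (hUmono : Monotone U)
    (Δ₀ : ℕ) (hΔ₀ : 1 ≤ Δ₀) :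
    Tendsto (fun β : ℝ => (1 - β) * (valueFn β lam U Δ₀).toReal)
      (nhdsWithin 1 (Set.Ioo (0 : ℝ) 1))
      (nhds (⨅ η : ℕ+, ((∑ ℓ ∈ Finset.Icc 1 (η : ℕ), U ℓ) + lam) / (η : ℝ))) := by
  change Tendsto _ _ (nhds (⨅ η : ℕ+, cycleAvg lam U η))
  set g := ⨅ η : ℕ+, cycleAvg lam U η with hgdef
  have hbdd : BddBelow (Set.range fun η : ℕ+ => cycleAvg lam U η) := by
    refine ⟨0, ?_⟩
    rintro _ ⟨η, rfl⟩
    exact div_nonneg (add_nonneg (Finset.sum_nonneg fun i _ => hU0 i) hlam) (Nat.cast_nonneg _)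
  have hg : ∀ η : ℕ, η * g ≤ (∑ ℓ ∈ Finset.Icc 1 η, U ℓ) + lam := by
    intro η
    rcases Nat.eq_zero_or_pos η with rfl | hη
    · simpa using hlam
    · have h : g ≤ cycleAvg lam U η := ciInf_le hbdd ⟨η, hη⟩
      rw [cycleAvg, le_div_iff₀ (by exact_mod_cast hη)] at h
      linarith
  have hmem : ∀ᶠ β : ℝ in nhdsWithin 1 (Set.Ioo (0 : ℝ) 1), β ∈ Set.Ioo (0 : ℝ) 1 :=
    self_mem_nhdsWithin
  have hlim : ∀ a b : ℝ, Tendsto (fun β : ℝ => a + (1 - β) * b)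
      (nhdsWithin 1 (Set.Ioo (0 : ℝ) 1)) (nhds a) := by
    intro a b
    have : Continuous fun β : ℝ => a + (1 - β) * b := by fun_prop
    simpa using (this.tendsto 1).mono_left nhdsWithin_le_nhds
  refine tendsto_order.2 ⟨fun x hx => ?_, fun x hx => ?_⟩
  · filter_upwards [hmem, (hlim g (-lam)).eventually_const_lt hx] with β hβ hx'
    have hpos : 0 < 1 - β := by linarith [hβ.2]
    -- Without finiteness of the value function its real part would be `0`.
    have hfin : valueFn β lam U Δ₀ ≠ ⊤ :=
      ne_top_of_le_ne_top ENNReal.ofReal_ne_top (valueFn_le hβ.1 hβ.2 hlam hU0 Δ₀ le_rfl)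
    have h := (ENNReal.ofReal_le_iff_le_toReal hfin).1
      (le_valueFn hβ.1 hβ.2 hlam hU0 hUmono hΔ₀ hg)
    have h2 := mul_le_mul_of_nonneg_left h hpos.le
    have h3 : (1 - β) * (g / (1 - β) - lam) = g + (1 - β) * (-lam) := by
      field_simp
      ring
    linarith
  · obtain ⟨η, hη⟩ := exists_lt_of_ciInf_lt hx
    set C := U Δ₀ + lam + (η : ℕ) * cycleAvg lam U η with hC
    filter_upwards [hmem, (hlim (cycleAvg lam U η) C).eventually_lt_const hη] with β hβ hx'
    have hpos : 0 < 1 - β := by linarith [hβ.2]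
    have hg0 : 0 ≤ cycleAvg lam U η :=
      div_nonneg (add_nonneg (Finset.sum_nonneg fun i _ => hU0 i) hlam) (Nat.cast_nonneg _)
    have hU := hU0 Δ₀
    have h := ENNReal.toReal_le_of_le_ofReal (by positivity)
      (valueFn_le hβ.1 hβ.2 hlam hU0 Δ₀ η.pos)
    have h2 := mul_le_mul_of_nonneg_left h hpos.le
    have h3 : (1 - β) * (cycleAvg lam U η / (1 - β) + C) = cycleAvg lam U η + (1 - β) * C := by
      field_simp
    rw [← hC, h3] at h2
    linarith
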